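/- Let R = ℚ[a,b]/⟨a^{m+1}, b^{m+1}, Σ_{i+j=m} a^i b^j⟩ with the ℤ/2-action swapping a and b. Then as a graded vector space R has basis {a^i b^j : 0 ≤ i ≤ m, 0 ≤ j ≤ m-1}, the invariant subspace R^+ has basis {a^i b^j + a^j b^i : 0 ≤ i ≤ j ≤ m-1}, and the Poincaré series satisfies P_R(z) = (1+z^2) P_{R^+}(z), where a and b have degree 2. -/

import Mathlib

open MvPolynomial in
/-- The defining ideal of `R = ℚ[a,b]/⟨a^(m+1), b^(m+1), Σ_{i+j=m} a^i b^j⟩`. -/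
noncomputable def stmt3Ideal (m : ℕ) : Ideal (MvPolynomial (Fin 2) ℚ) :=
  Ideal.span {(X 0 : MvPolynomial (Fin 2) ℚ) ^ (m + 1), (X 1 : MvPolynomial (Fin 2) ℚ) ^ (m + 1),
    ∑ i ∈ Finset.range (m + 1), (X 0 : MvPolynomial (Fin 2) ℚ) ^ i * X 1 ^ (m - i)}

/-- The ring `R = ℚ[a,b]/⟨a^(m+1), b^(m+1), Σ_{i+j=m} a^i b^j⟩`. -/
noncomputable abbrev stmt3R (m : ℕ) := MvPolynomial (Fin 2) ℚ ⧸ stmt3Ideal m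

/-- The class `a` of the first variable in `R`. -/
noncomputable def stmt3a (m : ℕ) : stmt3R m := Ideal.Quotient.mk _ (MvPolynomial.X 0)

/-- The class `b` of the second variable in `R`. -/
noncomputable def stmt3b (m : ℕ) : stmt3R m := Ideal.Quotient.mk _ (MvPolynomial.X 1)

/-- The degree-`d` graded piece of `R` (in the polynomial grading where `a, b` have
degree `1`; cohomologically `a, b` have degree `2`, so this is cohomological degree `2d`). -/
noncomputable def stmt3Grade (m d : ℕ) : Submodule ℚ (stmt3R m) :=
  Submodule.map (Ideal.Quotient.mkₐ ℚ (stmt3Ideal m)).toLinearMap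
    (MvPolynomial.homogeneousSubmodule (Fin 2) ℚ d)

/-!
Modulo the relation `∑ a ^ i * b ^ (m - i) = 0` every power `b ^ j` with `j ≥ m` reduces to lower
powers of `b`, so the monomials `a ^ i * b ^ j` with `i ≤ m`, `j < m` span. They are independent
because the relation is monic in `b`: adjoining to `K[α]/(α ^ (m + 1))` a root of it gives a free
module on the same monomials. An invariant `x` is half of `x + σ x`, a combination of symmetrized
monomials; those with `i = m` are rewritten by adding a multiple of the relation to its reflection,
where the two end terms agree, so one divides by two. Finally, the map `(i, j) ↦ (j + 1, i)` splits
the box of exponents into the triangle `i ≤ j` and a copy of it shifted by one degree, which is the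
identity of Poincaré series.
-/

section LinearAlgebra

variable {K M N P ι : Type*} [Ring K] [AddCommGroup M] [AddCommGroup N] [AddCommGroup P]
  [Module K M] [Module K N] [Module K P]

theorem linearIndepOn_comp_of_ker_le_ker {f : M →ₗ[K] N} {g : M →ₗ[K] P}
    (hfg : LinearMap.ker f ≤ LinearMap.ker g) {v : ι → M} {s : Set ι}
    (hg : LinearIndepOn K (g ∘ v) s) : LinearIndepOn K (f ∘ v) s := by
  rw [linearIndepOn_iff] at hg ⊢
  intro l hl hfl
  refine hg l hl ?_
  rw [← Finsupp.apply_linearCombination] at hfl ⊢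
  exact hfg hfl

theorem linearIndepOn_add_swap [PartialOrder ι] (h2 : IsLeftRegular (2 : K)) {v : ι × ι → M}
    {s t : Set (ι × ι)} (hv : LinearIndepOn K v s) (hts : t ⊆ s) (hswap : Set.MapsTo Prod.swap t s)
    (hle : ∀ p ∈ t, p.1 ≤ p.2) : LinearIndepOn K (fun p => v p + v p.swap) t := by
  rw [linearIndepOn_iff] at hv ⊢
  intro l hl hsum
  have hl_outside : ∀ p ∉ t, l p = 0 := (Finsupp.mem_supported' K l).1 hl
  have hsymm : l + l.mapDomain Prod.swap = 0 := by
    refine hv _ (add_mem (Finsupp.supported_mono hts hl) ?_) ?_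
    · classical
      exact (Finset.coe_subset.2 Finsupp.mapDomain_support).trans <| by
        rw [Finset.coe_image]
        exact (Set.image_mono hl).trans hswap.image_subset
    · rw [map_add, Finsupp.linearCombination_mapDomain]
      simpa [Finsupp.linearCombination_apply, Finsupp.sum, Finset.sum_add_distrib] using hsum
  ext ⟨i, j⟩
  by_cases hp : (i, j) ∈ t
  · have hcoeff : l (i, j) + l (j, i) = 0 := by
      have := DFunLike.congr_fun hsymm (i, j)
      rwa [Finsupp.add_apply, ← Prod.swap_prod_mk (a := j),
        Finsupp.mapDomain_apply Prod.swap_injective] at this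
    have hij : i ≤ j := hle _ hp
    rcases hij.eq_or_lt with rfl | hlt
    · exact h2 (by simpa [two_mul] using hcoeff)
    · rwa [hl_outside (j, i) fun h => (hle _ h).not_gt hlt, add_zero] at hcoeff
  · exact hl_outside _ hp

theorem finrank_span_image_eq_ncard [StrongRankCondition K] {v : ι → M} {s : Set ι}
    (hv : LinearIndepOn K v s) : Module.finrank K (Submodule.span K (v '' s)) = s.ncard := by
  rw [Module.finrank, Set.ncard, ← toENat_rank_span_set hv, Cardinal.toNat_toENat]

theorem mem_of_add_self_mem [Invertible (2 : K)] {S : Submodule K M} {x : M} (hx : x + x ∈ S) :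
    x ∈ S := by
  rw [← invOf_smul_smul (2 : K) x, two_smul]
  exact S.smul_mem _ hx

end LinearAlgebra

theorem mk_even_eq_one_add_X_sq_mul_mk_even {R : Type*} [Semiring R] {f g : ℕ → R}
    (h_zero : f 0 = g 0) (h_succ : ∀ d, f (d + 1) = g (d + 1) + g d) :
    PowerSeries.mk (fun n => if 2 ∣ n then f (n / 2) else 0) =
      (1 + PowerSeries.X ^ 2) * PowerSeries.mk (fun n => if 2 ∣ n then g (n / 2) else 0) := by
  ext n
  rw [add_mul, one_mul, map_add, PowerSeries.coeff_X_pow_mul']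
  simp only [PowerSeries.coeff_mk]
  match n with
  | 0 => simp [h_zero]
  | 1 => simp
  | n + 2 =>
    by_cases hn : 2 ∣ n <;> simp [hn, h_succ]

section Exponents

/-- The exponent pairs `(i, j)` of the monomials `a ^ i * b ^ j` forming a basis of the ring. -/
def boxExponents (m : ℕ) : Set (ℕ × ℕ) := {p | p.1 ≤ m ∧ p.2 < m}

/-- The exponent pairs `(i, j)` of the sums `a ^ i * b ^ j + a ^ j * b ^ i` forming a basis of the
invariants. -/
def triangleExponents (m : ℕ) : Set (ℕ × ℕ) := {p | p.1 ≤ p.2 ∧ p.2 < m}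

/-- The exponent pairs whose total degree lies in `T`: a singleton `T` selects one graded piece,
and `T = Set.univ` selects everything. -/
def degreeIn (T : Set ℕ) : Set (ℕ × ℕ) := {p | p.1 + p.2 ∈ T}

theorem inter_degreeIn_univ (s : Set (ℕ × ℕ)) : s ∩ degreeIn Set.univ = s :=
  Set.inter_eq_left.2 fun _ _ => Set.mem_univ _

theorem triangleExponents_subset_boxExponents (m : ℕ) : triangleExponents m ⊆ boxExponents m :=
  fun _ hp => ⟨(hp.1.trans_lt hp.2).le, hp.2⟩

theorem mapsTo_swap_triangleExponents (m : ℕ) :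
    Set.MapsTo Prod.swap (triangleExponents m) (boxExponents m) :=
  fun _ hp => ⟨hp.2.le, hp.1.trans_lt hp.2⟩

theorem finite_triangleExponents (m : ℕ) : (triangleExponents m).Finite :=
  ((Set.finite_Iio m).prod (Set.finite_Iio m)).subset fun _ hp => ⟨hp.1.trans_lt hp.2, hp.2⟩

theorem ncard_boxExponents_degree_zero (m : ℕ) :
    (boxExponents m ∩ degreeIn {0}).ncard = (triangleExponents m ∩ degreeIn {0}).ncard := by
  congr 1
  ext ⟨i, j⟩
  simp only [boxExponents, triangleExponents, degreeIn, Set.mem_inter_iff, Set.mem_ofPred_eq,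
    Set.mem_singleton_iff]
  omega

theorem boxExponents_degree_succ_eq_union (m d : ℕ) :
    boxExponents m ∩ degreeIn {d + 1} = triangleExponents m ∩ degreeIn {d + 1} ∪
      (fun p : ℕ × ℕ => (p.2 + 1, p.1)) '' (triangleExponents m ∩ degreeIn {d}) := by
  ext ⟨i, j⟩
  simp only [boxExponents, triangleExponents, degreeIn, Set.mem_inter_iff, Set.mem_union,
    Set.mem_image, Set.mem_ofPred_eq, Set.mem_singleton_iff, Prod.exists, Prod.mk.injEq]
  constructor
  · intro h
    rcases le_or_gt i j with hij | hji
    · exact Or.inl (by omega)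
    · exact Or.inr ⟨j, i - 1, by omega, by omega, rfl⟩
  · rintro (h | ⟨k, l, h, rfl, rfl⟩) <;> omega

theorem ncard_boxExponents_degree_succ (m d : ℕ) :
    (boxExponents m ∩ degreeIn {d + 1}).ncard =
      (triangleExponents m ∩ degreeIn {d + 1}).ncard +
        (triangleExponents m ∩ degreeIn {d}).ncard := by
  have hinj : Function.Injective fun p : ℕ × ℕ => (p.2 + 1, p.1) := by
    rintro ⟨i, j⟩ ⟨k, l⟩ h
    simp_all
  have hfin (T : Set ℕ) : (triangleExponents m ∩ degreeIn T).Finite :=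
    (finite_triangleExponents m).inter_of_left _
  rw [boxExponents_degree_succ_eq_union, Set.ncard_union_eq ?_ (hfin _) ((hfin _).image _),
    Set.ncard_image_of_injective _ hinj]
  rw [Set.disjoint_left]
  rintro _ ⟨⟨hle, -⟩, -⟩ ⟨⟨k, l⟩, ⟨⟨hkl, -⟩, -⟩, rfl⟩
  dsimp only at hle hkl
  omega

theorem mk_even_ncard_boxExponents_eq (m : ℕ) :
    PowerSeries.mk (fun n =>
        if 2 ∣ n then ((boxExponents m ∩ degreeIn {n / 2}).ncard : ℤ) else 0) =
      (1 + PowerSeries.X ^ 2) * PowerSeries.mk (fun n =>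
        if 2 ∣ n then ((triangleExponents m ∩ degreeIn {n / 2}).ncard : ℤ) else 0) :=
  mk_even_eq_one_add_X_sq_mul_mk_even
    (f := fun d => ((boxExponents m ∩ degreeIn {d}).ncard : ℤ))
    (g := fun d => ((triangleExponents m ∩ degreeIn {d}).ncard : ℤ))
    (congrArg _ (ncard_boxExponents_degree_zero m))
    fun d => by exact_mod_cast ncard_boxExponents_degree_succ m d

end Exponents

section Monomials

variable {K A B : Type*} [CommRing K] [CommRing A] [CommRing B] [Algebra K A] [Algebra K B]

/-- The monomial `a ^ i * b ^ j` with exponent pair `(i, j)`. -/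
def pairMonomial (a b : A) (p : ℕ × ℕ) : A := a ^ p.1 * b ^ p.2

/-- The symmetrized monomial `a ^ i * b ^ j + a ^ j * b ^ i` with exponent pair `(i, j)`. -/
def symmMonomial (a b : A) (p : ℕ × ℕ) : A := a ^ p.1 * b ^ p.2 + a ^ p.2 * b ^ p.1

theorem symmMonomial_swap (a b : A) (p : ℕ × ℕ) : symmMonomial a b p.swap = symmMonomial a b p :=
  add_comm _ _

theorem map_pairMonomial (f : A →ₐ[K] B) (a b : A) (p : ℕ × ℕ) :
    f (pairMonomial a b p) = pairMonomial (f a) (f b) p := by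
  simp only [pairMonomial, map_mul, map_pow]

variable (K) in
/-- The span of the basis monomials `a ^ i * b ^ j`, `i ≤ m`, `j < m`, with degree in `T`. -/
def boxSpan (a b : A) (m : ℕ) (T : Set ℕ) : Submodule K A :=
  Submodule.span K (pairMonomial a b '' (boxExponents m ∩ degreeIn T))

variable (K) in
/-- The span of the `a ^ i * b ^ j + a ^ j * b ^ i`, `i ≤ j < m`, with degree in `T`. -/
def triangleSpan (a b : A) (m : ℕ) (T : Set ℕ) : Submodule K A :=
  Submodule.span K (symmMonomial a b '' (triangleExponents m ∩ degreeIn T))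

theorem finrank_boxSpan [Nontrivial K] {a b : A} {m : ℕ}
    (h : LinearIndepOn K (pairMonomial a b) (boxExponents m)) (T : Set ℕ) :
    Module.finrank K (boxSpan K a b m T) = (boxExponents m ∩ degreeIn T).ncard :=
  finrank_span_image_eq_ncard (h.mono Set.inter_subset_left)

theorem finrank_triangleSpan [Nontrivial K] {a b : A} {m : ℕ}
    (h : LinearIndepOn K (symmMonomial a b) (triangleExponents m)) (T : Set ℕ) :
    Module.finrank K (triangleSpan K a b m T) = (triangleExponents m ∩ degreeIn T).ncard :=
  finrank_span_image_eq_ncard (h.mono Set.inter_subset_left)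

section Relations

variable {a b : A} {m : ℕ} {T : Set ℕ}

theorem pow_succ_eq_zero_of_sum_eq_zero (ha : a ^ (m + 1) = 0)
    (hab : ∑ i ∈ Finset.range (m + 1), a ^ i * b ^ (m - i) = 0) : b ^ (m + 1) = 0 := by
  have h := geom_sum₂_mul a b (m + 1)
  rw [Nat.add_sub_cancel, hab, ha, zero_mul, zero_sub, zero_eq_neg] at h
  exact h

theorem sum_pow_add_mul_pow_sub_eq_zero
    (hab : ∑ i ∈ Finset.range (m + 1), a ^ i * b ^ (m - i) = 0) (i : ℕ) {j : ℕ} (hj : m ≤ j) :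
    ∑ k ∈ Finset.range (m + 1), a ^ (i + k) * b ^ (j - k) = 0 := by
  rw [← mul_zero (a ^ i * b ^ (j - m)), ← hab, Finset.mul_sum]
  refine Finset.sum_congr rfl fun k hk => ?_
  have hk : k ≤ m := Finset.mem_range_succ_iff.1 hk
  rw [pow_add, ← Nat.sub_add_sub_cancel hj hk, pow_add]
  ring

theorem pairMonomial_mem_boxSpan (ha : a ^ (m + 1) = 0)
    (hab : ∑ i ∈ Finset.range (m + 1), a ^ i * b ^ (m - i) = 0) {i j : ℕ} (hT : i + j ∈ T) :
    pairMonomial a b (i, j) ∈ boxSpan K a b m T := by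
  induction j using Nat.strong_induction_on generalizing i with
  | _ j ih =>
    rcases lt_or_ge m i with hi | hi
    · rw [pairMonomial, pow_eq_zero_of_le hi ha, zero_mul]
      exact zero_mem _
    rcases lt_or_ge j m with hj | hj
    · exact Submodule.subset_span ⟨(i, j), ⟨⟨hi, hj⟩, hT⟩, rfl⟩
    have hreduce : pairMonomial a b (i, j) =
        -∑ k ∈ Finset.range m, pairMonomial a b (i + (k + 1), j - (k + 1)) := by
      have h := sum_pow_add_mul_pow_sub_eq_zero hab i hj
      rw [Finset.sum_range_succ', add_comm] at h
      exact eq_neg_of_add_eq_zero_left h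
    rw [hreduce]
    refine neg_mem (sum_mem fun k hk => ?_)
    have hk : k < m := Finset.mem_range.1 hk
    refine ih _ (by omega) ?_
    rwa [show i + (k + 1) + (j - (k + 1)) = i + j by omega]

/-- Add the relation `a ^ (m - n) * ∑ a ^ i * b ^ (m - i) = 0`, in which the powers `a ^ i` with
`i > m` vanish, to the same sum read backwards. -/
theorem sum_symmMonomial_eq_zero (ha : a ^ (m + 1) = 0)
    (hab : ∑ i ∈ Finset.range (m + 1), a ^ i * b ^ (m - i) = 0) {n : ℕ} (hn : n ≤ m) :
    ∑ k ∈ Finset.range (n + 1), symmMonomial a b (m - n + k, m - k) = 0 := by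
  have htrunc : ∑ k ∈ Finset.range (n + 1), a ^ (m - n + k) * b ^ (m - k) = 0 := by
    rw [← sum_pow_add_mul_pow_sub_eq_zero hab (m - n) le_rfl]
    refine Finset.sum_subset (Finset.range_mono (by omega)) fun k _ hk => ?_
    rw [Finset.mem_range, not_lt] at hk
    rw [pow_eq_zero_of_le (by omega) ha, zero_mul]
  have hreflect : ∑ k ∈ Finset.range (n + 1), a ^ (m - k) * b ^ (m - n + k) = 0 := by
    rw [← htrunc, ← Finset.sum_flip]
    refine Finset.sum_congr rfl fun k hk => ?_
    have hk : k ≤ n := Finset.mem_range_succ_iff.1 hk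
    rw [show m - (n - k) = m - n + k by omega, show m - n + (n - k) = m - k by omega]
  simp only [symmMonomial, Finset.sum_add_distrib, htrunc, hreflect, add_zero]

theorem symmMonomial_mem_triangleSpan_of_lt {i j : ℕ} (hi : i < m) (hj : j < m) (hT : i + j ∈ T) :
    symmMonomial a b (i, j) ∈ triangleSpan K a b m T := by
  rcases le_total i j with hij | hji
  · exact Submodule.subset_span ⟨(i, j), ⟨⟨hij, hj⟩, hT⟩, rfl⟩
  · rw [← symmMonomial_swap]
    rw [add_comm] at hT
    exact Submodule.subset_span ⟨(j, i), ⟨⟨hji, hi⟩, hT⟩, rfl⟩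

variable [Invertible (2 : K)]

theorem symmMonomial_mem_triangleSpan (ha : a ^ (m + 1) = 0)
    (hab : ∑ i ∈ Finset.range (m + 1), a ^ i * b ^ (m - i) = 0) {p : ℕ × ℕ}
    (hp : p ∈ boxExponents m) (hT : p.1 + p.2 ∈ T) :
    symmMonomial a b p ∈ triangleSpan K a b m T := by
  obtain ⟨i, j⟩ := p
  obtain ⟨hi, hj⟩ : i ≤ m ∧ j < m := hp
  rcases hi.lt_or_eq with hi | rfl
  · exact symmMonomial_mem_triangleSpan_of_lt hi hj hT
  obtain ⟨n, rfl⟩ : ∃ n, i = j + n + 1 := Nat.exists_eq_add_of_lt hj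
  have hsum := sum_symmMonomial_eq_zero ha hab (n := n + 1) (by omega)
  rw [Finset.sum_range_succ, Finset.sum_range_succ', add_assoc, add_comm] at hsum
  have hends : symmMonomial a b (j + n + 1, j) + symmMonomial a b (j + n + 1, j) =
      -∑ k ∈ Finset.range n, symmMonomial a b (j + (k + 1), j + n + 1 - (k + 1)) := by
    have hswap : symmMonomial a b (j, j + (n + 1)) = symmMonomial a b (j + (n + 1), j) :=
      symmMonomial_swap a b (j + (n + 1), j)
    refine eq_neg_of_add_eq_zero_left ?_
    simpa [hswap, add_assoc] using hsum
  refine mem_of_add_self_mem (hends ▸ neg_mem (sum_mem fun k hk => ?_))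
  have hk : k < n := Finset.mem_range.1 hk
  refine symmMonomial_mem_triangleSpan_of_lt (by omega) (by omega) ?_
  rwa [show j + (k + 1) + (j + n + 1 - (k + 1)) = j + n + 1 + j by omega]

theorem linearIndepOn_symmMonomial_triangleExponents
    (h : LinearIndepOn K (pairMonomial a b) (boxExponents m)) :
    LinearIndepOn K (symmMonomial a b) (triangleExponents m) :=
  linearIndepOn_add_swap (isUnit_of_invertible 2).isRegular.left h
    (triangleExponents_subset_boxExponents m) (mapsTo_swap_triangleExponents m) fun _ hp => hp.1

theorem triangleSpan_eq_boxSpan_inf_ker (ha : a ^ (m + 1) = 0)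
    (hab : ∑ i ∈ Finset.range (m + 1), a ^ i * b ^ (m - i) = 0) {σ : A →ₐ[K] A}
    (hσa : σ a = b) (hσb : σ b = a) :
    triangleSpan K a b m T =
      boxSpan K a b m T ⊓ LinearMap.ker (σ.toLinearMap - LinearMap.id) := by
  have hσ (p : ℕ × ℕ) : pairMonomial a b p + σ (pairMonomial a b p) = symmMonomial a b p := by
    rw [map_pairMonomial, hσa, hσb, pairMonomial, pairMonomial, mul_comm (b ^ p.1), symmMonomial]
  apply le_antisymm
  · rw [triangleSpan, Submodule.span_le]
    rintro _ ⟨⟨i, j⟩, ⟨-, hT⟩, rfl⟩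
    refine ⟨add_mem (pairMonomial_mem_boxSpan ha hab hT)
      (pairMonomial_mem_boxSpan ha hab (i := j) (by rwa [add_comm])), ?_⟩
    simp only [SetLike.mem_coe, LinearMap.mem_ker, LinearMap.sub_apply, LinearMap.id_apply,
      AlgHom.toLinearMap_apply, symmMonomial, map_add, map_mul, map_pow, hσa, hσb]
    ring
  · rintro x ⟨hx, hxσ⟩
    have hsymm : boxSpan K a b m T ≤
        (triangleSpan K a b m T).comap (LinearMap.id + σ.toLinearMap) := by
      rw [boxSpan, Submodule.span_le]
      rintro _ ⟨p, ⟨hp, hT⟩, rfl⟩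
      change pairMonomial a b p + σ (pairMonomial a b p) ∈ triangleSpan K a b m T
      rw [hσ]
      exact symmMonomial_mem_triangleSpan ha hab hp hT
    have hfix : σ x = x := sub_eq_zero.1 hxσ
    have hmem : x + σ x ∈ triangleSpan K a b m T := hsymm hx
    rw [hfix] at hmem
    exact mem_of_add_self_mem hmem

end Relations

end Monomials

section Presentation

open MvPolynomial

variable {K A : Type*} [CommRing K] [CommRing A] [Algebra K A] {m : ℕ}

theorem linearIndepOn_pairMonomial_root_root {f : Polynomial K} (hf : f.Monic)
    {g : Polynomial (AdjoinRoot f)} (hg : g.Monic) :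
    LinearIndepOn K (pairMonomial (AdjoinRoot.of g (AdjoinRoot.root f)) (AdjoinRoot.root g))
      {p | p.1 < f.natDegree ∧ p.2 < g.natDegree} := by
  let pf := AdjoinRoot.powerBasis' hf
  let pg := AdjoinRoot.powerBasis' hg
  let index (p : {p : ℕ × ℕ | p.1 < f.natDegree ∧ p.2 < g.natDegree}) : Fin pf.dim × Fin pg.dim :=
    (⟨p.1.1, p.2.1.trans_eq (AdjoinRoot.powerBasis'_dim hf).symm⟩,
      ⟨p.1.2, p.2.2.trans_eq (AdjoinRoot.powerBasis'_dim hg).symm⟩)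
  have hindex : Function.Injective index := by
    rintro ⟨⟨i, j⟩, _⟩ ⟨⟨k, l⟩, _⟩ h
    simpa [index] using h
  rw [LinearIndepOn]
  convert (pf.basis.smulTower pg.basis).linearIndependent.comp index hindex using 1
  funext p
  simp [index, pairMonomial, Algebra.smul_def, pf, pg]

theorem isMonicOfDegree_sum_C_pow_mul_X_pow [Nontrivial A] (a : A) (m : ℕ) :
    (∑ i ∈ Finset.range (m + 1),
      Polynomial.C a ^ i * Polynomial.X ^ (m - i) : Polynomial A).IsMonicOfDegree m := by
  refine (Polynomial.isMonicOfDegree_X_sub_one a).of_mul_right ?_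
  have hfactor : (∑ i ∈ Finset.range (m + 1), Polynomial.C a ^ i * Polynomial.X ^ (m - i)) *
      (Polynomial.X - Polynomial.C a) = Polynomial.X ^ (m + 1) - Polynomial.C (a ^ (m + 1)) := by
    have h := geom_sum₂_mul (Polynomial.C a) Polynomial.X (m + 1)
    rw [Nat.add_sub_cancel] at h
    rw [map_pow]
    linear_combination -h
  rw [hfactor]
  exact ⟨Polynomial.natDegree_X_pow_sub_C, Polynomial.monic_X_pow_sub_C _ m.succ_ne_zero⟩

variable (K m) in
/-- The ideal of relations `a ^ (m + 1)`, `b ^ (m + 1)`, `∑ a ^ i * b ^ (m - i)` over an arbitrary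
coefficient ring. -/
noncomputable def relationIdeal : Ideal (MvPolynomial (Fin 2) K) :=
  Ideal.span {X 0 ^ (m + 1), X 1 ^ (m + 1), ∑ i ∈ Finset.range (m + 1), X 0 ^ i * X 1 ^ (m - i)}

theorem relationIdeal_le_ker_iff (φ : MvPolynomial (Fin 2) K →ₐ[K] A) :
    relationIdeal K m ≤ RingHom.ker φ ↔
      φ (X 0) ^ (m + 1) = 0 ∧ ∑ i ∈ Finset.range (m + 1), φ (X 0) ^ i * φ (X 1) ^ (m - i) = 0 := by
  simp only [relationIdeal, Ideal.span_le, Set.insert_subset_iff, Set.singleton_subset_iff,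
    SetLike.mem_coe, RingHom.mem_ker, map_sum, map_mul, map_pow]
  exact ⟨fun ⟨ha, _, hab⟩ => ⟨ha, hab⟩,
    fun ⟨ha, hab⟩ => ⟨ha, pow_succ_eq_zero_of_sum_eq_zero ha hab, hab⟩⟩

theorem linearIndepOn_pairMonomial_boxExponents [Nontrivial K]
    {π : MvPolynomial (Fin 2) K →ₐ[K] A} (hker : RingHom.ker π ≤ relationIdeal K m) :
    LinearIndepOn K (pairMonomial (π (X 0)) (π (X 1))) (boxExponents m) := by
  let f : Polynomial K := Polynomial.X ^ (m + 1)
  let α := AdjoinRoot.root f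
  have hα : α ^ (m + 1) = 0 := by
    simpa [f] using AdjoinRoot.eval₂_root f
  have : Nontrivial (AdjoinRoot f) :=
    (AdjoinRoot.lift (RingHom.id K) 0 (by simp [f])).domain_nontrivial
  let g : Polynomial (AdjoinRoot f) :=
    ∑ i ∈ Finset.range (m + 1), Polynomial.C α ^ i * Polynomial.X ^ (m - i)
  have hg : g.IsMonicOfDegree m := isMonicOfDegree_sum_C_pow_mul_X_pow α m
  let φ : MvPolynomial (Fin 2) K →ₐ[K] AdjoinRoot g :=
    aeval ![AdjoinRoot.of g α, AdjoinRoot.root g]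
  have hφ : relationIdeal K m ≤ RingHom.ker φ := by
    rw [relationIdeal_le_ker_iff]
    refine ⟨?_, ?_⟩
    · simp [φ, ← map_pow, hα]
    · simpa [φ, g, Polynomial.eval₂_finsetSum, Polynomial.eval₂_mul, Polynomial.eval₂_pow]
        using AdjoinRoot.eval₂_root g
  have hmodel : LinearIndepOn K (φ ∘ pairMonomial (X 0) (X 1)) (boxExponents m) := by
    convert! linearIndepOn_pairMonomial_root_root (Polynomial.monic_X_pow (m + 1)) hg.monic using 1
    · funext p
      simp [φ, map_pairMonomial, α, f]
    · simp [hg.natDegree_eq, boxExponents]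
  have h := linearIndepOn_comp_of_ker_le_ker (f := π.toLinearMap) (g := φ.toLinearMap)
    (hker.trans hφ) hmodel
  exact h.congr fun p _ => map_pairMonomial π _ _ p

theorem boxSpan_eq_map_restrictSupport {π : MvPolynomial (Fin 2) K →ₐ[K] A}
    (hker : relationIdeal K m ≤ RingHom.ker π) (T : Set ℕ) :
    boxSpan K (π (X 0)) (π (X 1)) m T =
      (restrictSupport K {s : Fin 2 →₀ ℕ | s.degree ∈ T}).map π.toLinearMap := by
  obtain ⟨ha, hab⟩ := (relationIdeal_le_ker_iff π).1 hker
  have hmonomial (s : Fin 2 →₀ ℕ) :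
      π (monomial s 1) = pairMonomial (π (X 0)) (π (X 1)) (s 0, s 1) := by
    simp [monomial_eq, Finsupp.prod_fintype, pairMonomial]
  rw [restrictSupport_eq_span, Submodule.map_span]
  apply le_antisymm
  · refine Submodule.span_mono ?_
    rintro _ ⟨⟨i, j⟩, ⟨-, hT⟩, rfl⟩
    refine ⟨_, ⟨Finsupp.single 0 i + Finsupp.single 1 j, ?_, rfl⟩, ?_⟩
    · simpa [degreeIn] using hT
    · simp [hmonomial]
  · rw [Submodule.span_le]
    rintro _ ⟨_, ⟨s, hs, rfl⟩, rfl⟩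
    rw [AlgHom.toLinearMap_apply, hmonomial]
    refine pairMonomial_mem_boxSpan ha hab ?_
    simpa [Finsupp.degree_eq_sum] using hs

theorem boxSpan_univ_eq_top {π : MvPolynomial (Fin 2) K →ₐ[K] A}
    (hker : relationIdeal K m ≤ RingHom.ker π) (hπ : Function.Surjective π) :
    boxSpan K (π (X 0)) (π (X 1)) m Set.univ = ⊤ := by
  rw [boxSpan_eq_map_restrictSupport hker]
  simpa [LinearMap.range_eq_top] using hπ

theorem boxSpan_singleton_eq_map_homogeneousSubmodule {π : MvPolynomial (Fin 2) K →ₐ[K] A}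
    (hker : relationIdeal K m ≤ RingHom.ker π) (d : ℕ) :
    boxSpan K (π (X 0)) (π (X 1)) m {d} =
      (homogeneousSubmodule (Fin 2) K d).map π.toLinearMap := by
  rw [boxSpan_eq_map_restrictSupport hker, homogeneousSubmodule_eq_finsupp_supported]
  rfl

theorem stmt_3_general [Nontrivial K] [Invertible (2 : K)] (m : ℕ)
    (π : MvPolynomial (Fin 2) K →ₐ[K] A) (hπ : Function.Surjective π)
    (hker : RingHom.ker π = relationIdeal K m)
    (σ : A →ₐ[K] A) (hσa : σ (π (X 0)) = π (X 1)) (hσb : σ (π (X 1)) = π (X 0)) :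
    (LinearIndepOn K (pairMonomial (π (X 0)) (π (X 1))) (boxExponents m) ∧
      Submodule.span K (Set.range fun p : boxExponents m =>
        pairMonomial (π (X 0)) (π (X 1)) p) = ⊤) ∧
    (LinearIndepOn K (symmMonomial (π (X 0)) (π (X 1))) (triangleExponents m) ∧
      Submodule.span K (Set.range fun p : triangleExponents m =>
          symmMonomial (π (X 0)) (π (X 1)) p) =
        LinearMap.ker (σ.toLinearMap - LinearMap.id)) ∧
    PowerSeries.mk (fun d => if 2 ∣ d then
        (Module.finrank K ↥((homogeneousSubmodule (Fin 2) K (d / 2)).map π.toLinearMap) : ℤ)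
        else 0) =
      (1 + PowerSeries.X ^ 2) * PowerSeries.mk (fun d => if 2 ∣ d then
        (Module.finrank K ↥((homogeneousSubmodule (Fin 2) K (d / 2)).map π.toLinearMap ⊓
          LinearMap.ker (σ.toLinearMap - LinearMap.id)) : ℤ) else 0) := by
  obtain ⟨ha, hab⟩ := (relationIdeal_le_ker_iff π).1 hker.ge
  have hbox := linearIndepOn_pairMonomial_boxExponents hker.le
  have htriangle := linearIndepOn_symmMonomial_triangleExponents hbox
  have htop := boxSpan_univ_eq_top hker.ge hπ
  have hinv (T : Set ℕ) := triangleSpan_eq_boxSpan_inf_ker (T := T) ha hab hσa hσb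
  have hrank (d : ℕ) : Module.finrank K ↥((homogeneousSubmodule (Fin 2) K d).map π.toLinearMap) =
      (boxExponents m ∩ degreeIn {d}).ncard := by
    rw [← boxSpan_singleton_eq_map_homogeneousSubmodule hker.ge, finrank_boxSpan hbox]
  have hrank_inv (d : ℕ) : Module.finrank K
      ↥((homogeneousSubmodule (Fin 2) K d).map π.toLinearMap ⊓
        LinearMap.ker (σ.toLinearMap - LinearMap.id)) =
      (triangleExponents m ∩ degreeIn {d}).ncard := by
    rw [← boxSpan_singleton_eq_map_homogeneousSubmodule hker.ge, ← hinv,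
      finrank_triangleSpan htriangle]
  refine ⟨⟨hbox, ?_⟩, ⟨htriangle, ?_⟩, ?_⟩
  · rw [← htop, boxSpan, inter_degreeIn_univ, Set.image_eq_range]
  · rw [← top_inf_eq (LinearMap.ker _), ← htop, ← hinv, triangleSpan, inter_degreeIn_univ,
      Set.image_eq_range]
  · simp only [hrank, hrank_inv]
    exact mk_even_ncard_boxExponents_eq m

end Presentation

/-- Let `R = ℚ[a,b]/⟨a^(m+1), b^(m+1), Σ_{i+j=m} a^i b^j⟩` with the `ℤ/2`-action `σ`
swapping `a` and `b`.  Then: `R` has basis `{a^i b^j : 0 ≤ i ≤ m, 0 ≤ j ≤ m-1}`; the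
invariant subspace `R⁺ = ker(σ - id)` has basis `{a^i b^j + a^j b^i : 0 ≤ i ≤ j ≤ m-1}`;
and the Poincaré series (with `a, b` of degree `2`) satisfy `P_R(z) = (1+z²) P_{R⁺}(z)`. -/
theorem stmt_3 (m : ℕ) (hm : 2 ≤ m)
    (σ : stmt3R m ≃ₐ[ℚ] stmt3R m)
    (hσa : σ (stmt3a m) = stmt3b m) (hσb : σ (stmt3b m) = stmt3a m) :
    (LinearIndependent ℚ (fun p : {p : ℕ × ℕ // p.1 ≤ m ∧ p.2 < m} =>
        stmt3a m ^ p.1.1 * stmt3b m ^ p.1.2) ∧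
      Submodule.span ℚ (Set.range fun p : {p : ℕ × ℕ // p.1 ≤ m ∧ p.2 < m} =>
        stmt3a m ^ p.1.1 * stmt3b m ^ p.1.2) = ⊤) ∧
    (LinearIndependent ℚ (fun p : {p : ℕ × ℕ // p.1 ≤ p.2 ∧ p.2 < m} =>
        stmt3a m ^ p.1.1 * stmt3b m ^ p.1.2 + stmt3a m ^ p.1.2 * stmt3b m ^ p.1.1) ∧
      Submodule.span ℚ (Set.range fun p : {p : ℕ × ℕ // p.1 ≤ p.2 ∧ p.2 < m} =>
          stmt3a m ^ p.1.1 * stmt3b m ^ p.1.2 + stmt3a m ^ p.1.2 * stmt3b m ^ p.1.1) =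
        LinearMap.ker (σ.toLinearMap - LinearMap.id)) ∧
    (PowerSeries.mk (fun d =>
        if 2 ∣ d then (Module.finrank ℚ ↥(stmt3Grade m (d / 2)) : ℤ) else 0) =
      (1 + PowerSeries.X ^ 2) * PowerSeries.mk (fun d =>
        if 2 ∣ d then
          (Module.finrank ℚ
            ↥(stmt3Grade m (d / 2) ⊓ LinearMap.ker (σ.toLinearMap - LinearMap.id)) : ℤ)
        else 0)) := by
  exact stmt_3_general m (Ideal.Quotient.mkₐ ℚ (stmt3Ideal m)) (Ideal.Quotient.mkₐ_surjective ℚ _)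
    (Ideal.Quotient.mkₐ_ker ℚ _) σ.toAlgHom hσa hσb
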